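/- For all nonnegative integers a, b, c: if (a − c)² + (b − c)² = b, then a ≤ 2c and c ≤ a + b. -/

import Mathlib

theorem le_two_mul_of_sq_sub_add_sq_sub_le {a b c : ℤ}
    (h : (a - c) ^ 2 + (b - c) ^ 2 ≤ b) : a ≤ 2 * c := by
  have sum_le : (a - c) + (b - c) ≤ b :=
    calc (a - c) + (b - c)
      _ ≤ (a - c) ^ 2 + (b - c) ^ 2 := add_le_add (Int.le_self_sq _) (Int.le_self_sq _)
      _ ≤ b := h
  linarith

theorem le_add_of_sq_sub_le {a b c : ℤ} (h : (a - c) ^ 2 ≤ b) : c ≤ a + b := by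
  have sub_le : c - a ≤ b :=
    calc c - a
      _ ≤ (c - a) ^ 2 := Int.le_self_sq _
      _ = (a - c) ^ 2 := sub_sq_comm c a
      _ ≤ b := h
  exact sub_le_iff_le_add'.mp sub_le

theorem vieta_lemma_mu2_general (a b c : ℤ) (h : (a - c) ^ 2 + (b - c) ^ 2 ≤ b) :
    a ≤ 2 * c ∧ c ≤ a + b :=
  ⟨le_two_mul_of_sq_sub_add_sq_sub_le h,
    le_add_of_sq_sub_le ((le_add_of_nonneg_right (sq_nonneg (b - c))).trans h)⟩

/-- Quadratic Diophantine lemma (Vieta): for nonnegative integers `a, b, c`, if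
`(a − c)² + (b − c)² = b` then `a ≤ 2c` and `c ≤ a + b`. -/
theorem vieta_lemma_mu2 (a b c : ℕ)
    (h : ((a : ℤ) - c) ^ 2 + ((b : ℤ) - c) ^ 2 = b) :
    a ≤ 2 * c ∧ c ≤ a + b := by
  exact_mod_cast vieta_lemma_mu2_general a b c h.le
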